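/- arXiv:1406.2292 — 2 statements merged into one kernel-verified Lean document; each statement's English description precedes it below -/
import Mathlib

section
/- Fix a > 0, ν > 0, μ > 0 and Heston parameters σ > 0, κ > 0, m > 0, r ≥ 0, ρ ∈ [−1,1], ω > 0. Then there exists a constant M > 0 such that for all test functions u, v on Ω = ℝ × [a,∞): |a_H^{φ,ψ}(u,v)| ≤ M ‖u‖_{V_{φ,ψ}} ‖v‖_{V_{φ,ψ}}, where a_H^{φ,ψ}(u,v) = ∫_Ω (L^H u)(x,y) \overline{v}(x,y) φ(x)² ψ(y)² dx dy. -/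
/-!
Integrating by parts once, in `x` for the term `y u_xx` and in `y` for the terms `y u_yy` and
`y u_xy`, turns the form into the integral of a combination of products of at most first
derivatives of `u` and `v`, with weight `W` (`formH_eq_weak`). The weight `exp (2 ν |x|)` is not
differentiable at `x = 0`, but Fubini reduces matters to lines, where one exceptional point is
harmless for a continuous function (`integral_deriv_eq_zero`).

In the weak form the coefficients of the terms with two, one and no derivatives are `O(y)`, `O(y²)`
and `O(y³)` on `[a, ∞)`, so the integrand is bounded by a constant times the product of the
densities `√y (|∇·| + y |·|) √W` of `u` and `v` (`exists_weak_bound`). Cauchy–Schwarz then reduces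
the claim to bounding the `L²` norm of the density by the `V`-norm, in which only the part
`∫ y³ |v|² W` is not already present. The Gaussian weight supplies it: since `∂W/∂y = 2 μ y W`,
integrating `∂/∂y (y² |v|² W)` gives `μ² ∫ y³ |v|² W ≤ ∫ y |v_y|² W` (`hardy`).
-/

open MeasureTheory Real

noncomputable section

/-- The domain `Ω = ℝ × [a, ∞)` as a subset of `ℝ²`. -/
def dom (a : ℝ) : Set (ℝ × ℝ) := {p : ℝ × ℝ | a ≤ p.2}

/-- The squared weight `φ(x)² ψ(y)²` where `φ(x) = e^{ν|x|}` and `ψ(y) = e^{(μ/2)y²}`. -/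
def W (ν μ : ℝ) (p : ℝ × ℝ) : ℝ :=
  Real.exp (ν * |p.1|) ^ 2 * Real.exp (μ / 2 * p.2 ^ 2) ^ 2

/-- A test function: smooth, with compact support contained in `ℝ × (a, ∞)`. -/
def IsTest (a : ℝ) (v : ℝ × ℝ → ℂ) : Prop :=
  ContDiff ℝ (⊤ : ℕ∞) v ∧ HasCompactSupport v ∧ tsupport v ⊆ {p : ℝ × ℝ | a < p.2}

/-- Partial derivative in the first (x) variable. -/
def dX (v : ℝ × ℝ → ℂ) (p : ℝ × ℝ) : ℂ := fderiv ℝ v p ((1 : ℝ), (0 : ℝ))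

/-- Partial derivative in the second (y) variable. -/
def dY (v : ℝ × ℝ → ℂ) (p : ℝ × ℝ) : ℂ := fderiv ℝ v p ((0 : ℝ), (1 : ℝ))

/-- Squared weighted L² norm `‖v‖²_{φ,ψ}`. -/
def L2normSq (a ν μ : ℝ) (v : ℝ × ℝ → ℂ) : ℝ :=
  ∫ p in dom a, ‖v p‖ ^ 2 * W ν μ p

/-- Squared weighted V norm
`‖v‖²_{V} = ‖v‖²_{φ,ψ} + ‖√y ∂v/∂x‖²_{φ,ψ} + ‖√y ∂v/∂y‖²_{φ,ψ}`. -/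
def VnormSq (a ν μ : ℝ) (v : ℝ × ℝ → ℂ) : ℝ :=
  L2normSq a ν μ v + (∫ p in dom a, p.2 * ‖dX v p‖ ^ 2 * W ν μ p)
    + ∫ p in dom a, p.2 * ‖dY v p‖ ^ 2 * W ν μ p

/-- The Heston operator `L^H`. -/
def LH (σ κ m r ρ ω : ℝ) (u : ℝ × ℝ → ℂ) (p : ℝ × ℝ) : ℂ :=
  -(1 / 2 : ℂ) * (p.2 : ℂ) * dX (dX u) p
    - ((σ ^ 2 / 2 : ℝ) : ℂ) * (p.2 : ℂ) * dY (dY u) p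
    - ((ρ * σ : ℝ) : ℂ) * (p.2 : ℂ) * dY (dX u) p
    - ((ω * ρ * σ * p.2 ^ 2 - 1 / 2 * p.2 + r : ℝ) : ℂ) * dX u p
    - ((ω * σ ^ 2 * p.2 ^ 2 + κ * (m - p.2) : ℝ) : ℂ) * dY u p
    - ((1 / 2 * ω * σ ^ 2 * p.2 * (ω * p.2 ^ 2 + 1) + ω * p.2 * κ * (m - p.2) - r : ℝ) : ℂ) * u p

/-- The sesquilinear form `a_H^{φ,ψ}(u,v) = ∫_Ω (L^H u) conj(v) φ²ψ² dx dy`. -/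
def formH (a ν μ σ κ m r ρ ω : ℝ) (u v : ℝ × ℝ → ℂ) : ℂ :=
  ∫ p in dom a, LH σ κ m r ρ ω u p * (starRingEnd ℂ) (v p) * ((W ν μ p : ℝ) : ℂ)

/-! ### Integration by parts -/

/-- The fundamental theorem of calculus on the line for a compactly supported continuous function
which may fail to be differentiable at the origin, like `t ↦ exp (ν * |t|)`. -/
lemma integral_deriv_eq_zero {E : Type*} [NormedAddCommGroup E] [NormedSpace ℝ E] [CompleteSpace E]
    {f f' : ℝ → E} (hc : Continuous f) (hs : HasCompactSupport f)
    (hd : ∀ t, t ≠ 0 → HasDerivAt f (f' t) t) (hi : Integrable f') : ∫ t, f' t = 0 := by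
  have h0 := hs.is_zero_at_infty
  rw [cocompact_eq_atBot_atTop, Filter.tendsto_sup] at h0
  rw [← intervalIntegral.integral_Iic_add_Ioi (b := 0) hi.integrableOn hi.integrableOn,
    integral_Iic_of_hasDerivAt_of_tendsto hc.continuousWithinAt (fun x hx => hd x (ne_of_lt hx))
      hi.integrableOn h0.1,
    integral_Ioi_of_hasDerivAt_of_tendsto hc.continuousWithinAt (fun x hx => hd x (ne_of_gt hx))
      hi.integrableOn h0.2]
  simp

lemma integral_dx_eq_zero {E : Type*} [NormedAddCommGroup E] [NormedSpace ℝ E] [CompleteSpace E]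
    {F F' : ℝ × ℝ → E} (hc : Continuous F) (hs : HasCompactSupport F)
    (hd : ∀ x y : ℝ, x ≠ 0 → HasDerivAt (fun t => F (t, y)) (F' (x, y)) x) (hi : Integrable F') :
    ∫ p, F' p = 0 := by
  rw [Measure.volume_eq_prod] at hi ⊢
  rw [integral_prod_symm _ hi]
  refine integral_eq_zero_of_ae ?_
  filter_upwards [hi.prod_left_ae] with y hy
  refine integral_deriv_eq_zero (f := fun t => F (t, y)) (by fun_prop) ?_ (fun t ht => hd t y ht) hy
  refine HasCompactSupport.intro (hs.isCompact.image continuous_fst) fun t ht => ?_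
  by_contra hne
  exact ht ⟨(t, y), subset_tsupport _ hne, rfl⟩

lemma integral_dy_eq_zero {E : Type*} [NormedAddCommGroup E] [NormedSpace ℝ E] [CompleteSpace E]
    {F F' : ℝ × ℝ → E} (hc : Continuous F) (hs : HasCompactSupport F)
    (hd : ∀ x y : ℝ, HasDerivAt (fun t => F (x, t)) (F' (x, y)) y) (hi : Integrable F') :
    ∫ p, F' p = 0 := by
  rw [Measure.volume_eq_prod] at hi ⊢
  rw [integral_prod _ hi]
  refine integral_eq_zero_of_ae ?_
  filter_upwards [hi.prod_right_ae] with x hx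
  refine integral_deriv_eq_zero (f := fun t => F (x, t)) (by fun_prop) ?_ (fun t _ => hd x t) hx
  refine HasCompactSupport.intro (hs.isCompact.image continuous_snd) fun t ht => ?_
  by_contra hne
  exact ht ⟨(x, t), subset_tsupport _ hne, rfl⟩

/-! ### The weight -/

lemma continuous_W (ν μ : ℝ) : Continuous (W ν μ) := by
  unfold W; fun_prop

lemma W_pos (ν μ : ℝ) (p : ℝ × ℝ) : 0 < W ν μ p := by
  unfold W; positivity

/-- The derivative of `|x|` away from `0`, with the value `-1` at `0`. -/
def sgn (x : ℝ) : ℝ := if 0 < x then 1 else -1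

lemma measurable_sgn : Measurable sgn :=
  Measurable.ite measurableSet_Ioi measurable_const measurable_const

lemma abs_sgn (x : ℝ) : |sgn x| = 1 := by
  unfold sgn; split_ifs <;> simp

lemma hasDerivAt_abs_sgn {x : ℝ} (hx : x ≠ 0) : HasDerivAt (fun t : ℝ => |t|) (sgn x) x := by
  unfold sgn
  rcases lt_or_gt_of_ne hx with h | h
  · rw [if_neg h.le.not_gt]; exact hasDerivAt_abs_neg h
  · rw [if_pos h]; exact hasDerivAt_abs_pos h

lemma hasDerivAt_W_x (ν μ : ℝ) {x : ℝ} (y : ℝ) (hx : x ≠ 0) :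
    HasDerivAt (fun t => W ν μ (t, y)) (2 * ν * sgn x * W ν μ (x, y)) x := by
  have h := ((((hasDerivAt_abs_sgn hx).const_mul ν).exp).pow 2).mul_const
    (Real.exp (μ / 2 * y ^ 2) ^ 2)
  refine h.congr_deriv ?_
  simp only [W]
  ring

lemma hasDerivAt_W_y (ν μ x y : ℝ) :
    HasDerivAt (fun t => W ν μ (x, t)) (2 * μ * y * W ν μ (x, y)) y := by
  have h := (((((hasDerivAt_id y).pow 2).const_mul (μ / 2)).exp).pow 2).const_mul
    (Real.exp (ν * |x|) ^ 2)
  refine h.congr_deriv ?_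
  simp only [W, id]
  simp
  ring

/-! ### Test functions -/

lemma IsTest.fderiv_apply {a : ℝ} {v : ℝ × ℝ → ℂ} (h : IsTest a v) (e : ℝ × ℝ) :
    IsTest a (fun p => fderiv ℝ v p e) := by
  refine ⟨?_, h.2.1.fderiv_apply ℝ e, (closure_mono ?_).trans ((tsupport_fderiv_subset ℝ).trans h.2.2)⟩
  · exact (h.1.fderiv_right (m := (⊤ : ℕ∞)) (by simp)).clm_apply contDiff_const
  · intro p hp hp'
    exact hp (by simp [hp'])

lemma IsTest.dX {a : ℝ} {v : ℝ × ℝ → ℂ} (h : IsTest a v) : IsTest a (dX v) :=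
  h.fderiv_apply _

lemma IsTest.dY {a : ℝ} {v : ℝ × ℝ → ℂ} (h : IsTest a v) : IsTest a (dY v) :=
  h.fderiv_apply _

lemma IsTest.continuous {a : ℝ} {v : ℝ × ℝ → ℂ} (h : IsTest a v) : Continuous v :=
  h.1.continuous

lemma IsTest.eq_zero {a : ℝ} {v : ℝ × ℝ → ℂ} (h : IsTest a v) {p : ℝ × ℝ} (hp : p.2 ≤ a) :
    v p = 0 :=
  image_eq_zero_of_notMem_tsupport fun hm => (h.2.2 hm).not_ge hp

lemma IsTest.hasDerivAt_x {a : ℝ} {v : ℝ × ℝ → ℂ} (h : IsTest a v) (x y : ℝ) :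
    HasDerivAt (fun t => v (t, y)) (_root_.dX v (x, y)) x :=
  ((h.1.differentiable (by simp)) (x, y)).hasFDerivAt.comp_hasDerivAt x
    ((hasDerivAt_id x).prodMk (hasDerivAt_const x y))

lemma IsTest.hasDerivAt_y {a : ℝ} {v : ℝ × ℝ → ℂ} (h : IsTest a v) (x y : ℝ) :
    HasDerivAt (fun t => v (x, t)) (_root_.dY v (x, y)) y :=
  ((h.1.differentiable (by simp)) (x, y)).hasFDerivAt.comp_hasDerivAt y
    ((hasDerivAt_const y x).prodMk (hasDerivAt_id y))

lemma vanish_off_tsupport {v : ℝ × ℝ → ℂ} {p : ℝ × ℝ} (hp : p ∉ tsupport v) :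
    v p = 0 ∧ dX v p = 0 ∧ dY v p = 0 := by
  have h : fderiv ℝ v p = 0 :=
    image_eq_zero_of_notMem_tsupport fun hm => hp (tsupport_fderiv_subset ℝ hm)
  exact ⟨image_eq_zero_of_notMem_tsupport hp, by simp [dX, h], by simp [dY, h]⟩

/-- A function vanishing wherever `v`, `∂v/∂x` and `∂v/∂y` all vanish has compact support. -/
lemma IsTest.hasCompactSupport_of {a : ℝ} {v : ℝ × ℝ → ℂ} (h : IsTest a v) {E : Type*} [Zero E]
    {f : ℝ × ℝ → E} (hf : ∀ p, v p = 0 → _root_.dX v p = 0 → _root_.dY v p = 0 → f p = 0) :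
    HasCompactSupport f :=
  HasCompactSupport.intro h.2.1.isCompact fun p hp =>
    let ⟨h0, h1, h2⟩ := vanish_off_tsupport hp
    hf p h0 h1 h2

lemma IsTest.integrable_of {a : ℝ} {v : ℝ × ℝ → ℂ} (h : IsTest a v) {E : Type*}
    [NormedAddCommGroup E] {f : ℝ × ℝ → E} (hc : Continuous f)
    (hf : ∀ p, v p = 0 → _root_.dX v p = 0 → _root_.dY v p = 0 → f p = 0) : Integrable f :=
  hc.integrable_of_hasCompactSupport (h.hasCompactSupport_of hf)

lemma HasDerivAt.conj' {f : ℝ → ℂ} {f' : ℂ} {x : ℝ} (h : HasDerivAt f f' x) :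
    HasDerivAt (fun t => (starRingEnd ℂ) (f t)) ((starRingEnd ℂ) f') x :=
  Complex.conjCLE.toContinuousLinearMap.hasFDerivAt.comp_hasDerivAt x h

/-! ### The weighted Hardy inequality and the energy density -/

/-- A Hardy-type inequality, from integrating `∂/∂y (y² |v|² W)` and `∂W/∂y = 2 μ y W`. -/
lemma hardy {a ν μ : ℝ} (ha : 0 < a) (hμ : 0 < μ) {v : ℝ × ℝ → ℂ} (hv : IsTest a v) :
    μ ^ 2 * ∫ p, p.2 ^ 3 * ‖v p‖ ^ 2 * W ν μ p ≤ ∫ p, p.2 * ‖dY v p‖ ^ 2 * W ν μ p := by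
  have hvc := hv.continuous
  have hvy := hv.dY.continuous
  have hW := continuous_W ν μ
  have hi0 : Integrable (fun p : ℝ × ℝ => p.2 ^ 3 * ‖v p‖ ^ 2 * W ν μ p) :=
    hv.integrable_of (by fun_prop) (by intro p h0 h1 h2; simp [h0])
  have hi1 : Integrable (fun p : ℝ × ℝ => p.2 * ‖dY v p‖ ^ 2 * W ν μ p) :=
    hv.integrable_of (by fun_prop) (by intro p h0 h1 h2; simp [h2])
  have hi2 : Integrable (fun p : ℝ × ℝ => 2 * p.2 * ‖v p‖ ^ 2 * W ν μ p
      + p.2 ^ 2 * (2 * inner ℝ (v p) (dY v p)) * W ν μ p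
      + p.2 ^ 2 * ‖v p‖ ^ 2 * (2 * μ * p.2 * W ν μ p)) :=
    hv.integrable_of (by fun_prop) (by intro p h0 h1 h2; simp [h0])
  have hz := integral_dy_eq_zero (F := fun p : ℝ × ℝ => p.2 ^ 2 * ‖v p‖ ^ 2 * W ν μ p)
    (by fun_prop) (hv.hasCompactSupport_of (by intro p h0 h1 h2; simp [h0]))
    (fun x y => by
      refine ((((hasDerivAt_id y).pow 2).mul (hv.hasDerivAt_y x y).norm_sq).mul
        (hasDerivAt_W_y ν μ x y)).congr_deriv ?_
      simp
      ring) hi2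
  -- `2 y² |v| |v_y| ≤ μ y³ |v|² + μ⁻¹ y |v_y|²`, multiplied by `μ`
  have hle : ∫ p, (μ ^ 2 * (p.2 ^ 3 * ‖v p‖ ^ 2 * W ν μ p) - p.2 * ‖dY v p‖ ^ 2 * W ν μ p) ≤
      ∫ p, μ * (2 * p.2 * ‖v p‖ ^ 2 * W ν μ p
      + p.2 ^ 2 * (2 * inner ℝ (v p) (dY v p)) * W ν μ p
      + p.2 ^ 2 * ‖v p‖ ^ 2 * (2 * μ * p.2 * W ν μ p)) := by
    refine integral_mono ((hi0.const_mul _).sub hi1) (hi2.const_mul _) fun p => ?_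
    rcases le_total p.2 a with hp | hp
    · simp [hv.eq_zero hp, hv.dY.eq_zero hp]
    · have hy : 0 < p.2 := ha.trans_le hp
      have hw := W_pos ν μ p
      have hin := neg_le_of_abs_le (abs_real_inner_le_norm (v p) (dY v p))
      have h1 : 0 ≤ W ν μ p * (p.2 * (‖dY v p‖ - μ * p.2 * ‖v p‖) ^ 2) := by positivity
      have h2 : 0 ≤ W ν μ p * (2 * μ * p.2 * ‖v p‖ ^ 2) := by positivity
      have h3 : 0 ≤ W ν μ p * (2 * μ * p.2 ^ 2 * (inner ℝ (v p) (dY v p) + ‖v p‖ * ‖dY v p‖)) := by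
        have : 0 ≤ inner ℝ (v p) (dY v p) + ‖v p‖ * ‖dY v p‖ := by linarith
        positivity
      simp only
      linarith
  rw [integral_const_mul, hz, integral_sub (hi0.const_mul _) hi1, integral_const_mul] at hle
  linarith

/-- The density `√y (|v_x| + |v_y| + y |v|) √W`, whose `L²` norm is bounded by a
multiple of the `V`-norm, thanks to the Hardy-type inequality. -/
def dens (ν μ : ℝ) (v : ℝ × ℝ → ℂ) (p : ℝ × ℝ) : ℝ :=
  √p.2 * (‖dX v p‖ + ‖dY v p‖ + p.2 * ‖v p‖) * √(W ν μ p)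

lemma IsTest.continuous_dens {a ν μ : ℝ} {v : ℝ × ℝ → ℂ} (hv : IsTest a v) :
    Continuous (dens ν μ v) := by
  have hvc := hv.continuous
  have hvx := hv.dX.continuous
  have hvy := hv.dY.continuous
  have hW := continuous_W ν μ
  unfold dens
  fun_prop

lemma IsTest.hasCompactSupport_dens {a ν μ : ℝ} {v : ℝ × ℝ → ℂ} (hv : IsTest a v) :
    HasCompactSupport (dens ν μ v) :=
  hv.hasCompactSupport_of (by intro p h0 h1 h2; simp [dens, h0, h1, h2])

lemma IsTest.dens_nonneg {a ν μ : ℝ} (ha : 0 < a) {v : ℝ × ℝ → ℂ} (hv : IsTest a v) (p : ℝ × ℝ) :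
    0 ≤ dens ν μ v p := by
  rcases le_total p.2 a with hp | hp
  · simp [dens, hv.eq_zero hp, hv.dX.eq_zero hp, hv.dY.eq_zero hp]
  · have hy : 0 < p.2 := ha.trans_le hp
    unfold dens
    positivity

lemma integral_dens_sq_le {a ν μ : ℝ} (ha : 0 < a) (hμ : 0 < μ) {v : ℝ × ℝ → ℂ}
    (hv : IsTest a v) :
    ∫ p, dens ν μ v p ^ 2 ≤ 3 * (1 + (μ ^ 2)⁻¹) * VnormSq a ν μ v := by
  have hvc := hv.continuous
  have hvx := hv.dX.continuous
  have hvy := hv.dY.continuous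
  have hW := continuous_W ν μ
  have e1 : ∫ p in dom a, p.2 * ‖dX v p‖ ^ 2 * W ν μ p = ∫ p, p.2 * ‖dX v p‖ ^ 2 * W ν μ p :=
    setIntegral_eq_integral_of_forall_compl_eq_zero fun p hp => by
      simp [hv.dX.eq_zero (p := p) (not_le.1 hp).le]
  have e2 : ∫ p in dom a, p.2 * ‖dY v p‖ ^ 2 * W ν μ p = ∫ p, p.2 * ‖dY v p‖ ^ 2 * W ν μ p :=
    setIntegral_eq_integral_of_forall_compl_eq_zero fun p hp => by
      simp [hv.dY.eq_zero (p := p) (not_le.1 hp).le]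
  have e0 : 0 ≤ L2normSq a ν μ v :=
    integral_nonneg fun p => mul_nonneg (by positivity) (W_pos ν μ p).le
  have n1 : 0 ≤ ∫ p, p.2 * ‖dX v p‖ ^ 2 * W ν μ p := by
    rw [← e1]
    refine setIntegral_nonneg (measurableSet_le measurable_const measurable_snd) fun p hp => ?_
    have hy : 0 < p.2 := ha.trans_le hp
    have := W_pos ν μ p
    positivity
  have hi0 : Integrable (fun p : ℝ × ℝ => p.2 ^ 3 * ‖v p‖ ^ 2 * W ν μ p) :=
    hv.integrable_of (by fun_prop) (by intro p h0 h1 h2; simp [h0])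
  have hi1 : Integrable (fun p : ℝ × ℝ => p.2 * ‖dX v p‖ ^ 2 * W ν μ p) :=
    hv.integrable_of (by fun_prop) (by intro p h0 h1 h2; simp [h1])
  have hi2 : Integrable (fun p : ℝ × ℝ => p.2 * ‖dY v p‖ ^ 2 * W ν μ p) :=
    hv.integrable_of (by fun_prop) (by intro p h0 h1 h2; simp [h2])
  have hd : Integrable (fun p => dens ν μ v p ^ 2) :=
    hv.integrable_of (hv.continuous_dens.pow 2) (by intro p h0 h1 h2; simp [dens, h0, h1, h2])
  have hle : ∫ p, dens ν μ v p ^ 2 ≤ ∫ p, 3 * (p.2 * ‖dX v p‖ ^ 2 * W ν μ p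
      + p.2 * ‖dY v p‖ ^ 2 * W ν μ p + p.2 ^ 3 * ‖v p‖ ^ 2 * W ν μ p) := by
    refine integral_mono hd (((hi1.add hi2).add hi0).const_mul 3) fun p => ?_
    rcases le_total p.2 a with hp | hp
    · simp [dens, hv.eq_zero hp, hv.dX.eq_zero hp, hv.dY.eq_zero hp]
    · have hy : 0 < p.2 := ha.trans_le hp
      have hw := W_pos ν μ p
      simp only [dens, mul_pow, Real.sq_sqrt hy.le, Real.sq_sqrt hw.le]
      have h1 : 0 ≤ p.2 * W ν μ p * ((‖dX v p‖ - ‖dY v p‖) ^ 2 + (‖dX v p‖ - p.2 * ‖v p‖) ^ 2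
        + (‖dY v p‖ - p.2 * ‖v p‖) ^ 2) := by positivity
      linarith
  have hi12 : Integrable (fun p : ℝ × ℝ => p.2 * ‖dX v p‖ ^ 2 * W ν μ p
      + p.2 * ‖dY v p‖ ^ 2 * W ν μ p) := hi1.add hi2
  rw [integral_const_mul, integral_add hi12 hi0, integral_add hi1 hi2] at hle
  have hh : ∫ p, p.2 ^ 3 * ‖v p‖ ^ 2 * W ν μ p
      ≤ (μ ^ 2)⁻¹ * ∫ p, p.2 * ‖dY v p‖ ^ 2 * W ν μ p := by
    rw [le_inv_mul_iff₀ (by positivity)]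
    exact hardy ha hμ hv
  unfold VnormSq
  rw [e1, e2]
  have hc : 0 ≤ (μ ^ 2)⁻¹ := by positivity
  have := mul_nonneg hc e0
  have := mul_nonneg hc n1
  linarith

lemma integral_dens_mul_le {a ν μ : ℝ} (ha : 0 < a) (hμ : 0 < μ) {u v : ℝ × ℝ → ℂ}
    (hu : IsTest a u) (hv : IsTest a v) :
    ∫ p, dens ν μ u p * dens ν μ v p ≤
      3 * (1 + (μ ^ 2)⁻¹) * √(VnormSq a ν μ u) * √(VnormSq a ν μ v) := by
  have h := integral_mul_le_Lp_mul_Lq_of_nonneg (μ := volume) Real.HolderConjugate.two_two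
    (Filter.Eventually.of_forall (hu.dens_nonneg (ν := ν) (μ := μ) ha))
    (Filter.Eventually.of_forall (hv.dens_nonneg (ν := ν) (μ := μ) ha))
    (hu.continuous_dens.memLp_of_hasCompactSupport hu.hasCompactSupport_dens)
    (hv.continuous_dens.memLp_of_hasCompactSupport hv.hasCompactSupport_dens)
  simp only [Real.rpow_two, ← Real.sqrt_eq_rpow] at h
  have hc : 0 ≤ 3 * (1 + (μ ^ 2)⁻¹) := by positivity
  calc _ ≤ _ := h
    _ ≤ √(3 * (1 + (μ ^ 2)⁻¹) * VnormSq a ν μ u) * √(3 * (1 + (μ ^ 2)⁻¹) * VnormSq a ν μ v) := by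
      gcongr
      · exact integral_dens_sq_le ha hμ hu
      · exact integral_dens_sq_le ha hμ hv
    _ = √(3 * (1 + (μ ^ 2)⁻¹)) ^ 2 * √(VnormSq a ν μ u) * √(VnormSq a ν μ v) := by
      rw [Real.sqrt_mul hc, Real.sqrt_mul hc]; ring
    _ = _ := by rw [Real.sq_sqrt hc]

/-! ### Polynomial coefficients on `[a, ∞)` -/

lemma exists_quadratic_bound {a : ℝ} (ha : 0 < a) {c0 c1 c2 : ℝ} (h0 : 0 ≤ c0) (h1 : 0 ≤ c1)
    (h2 : 0 ≤ c2) :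
    ∃ C : ℝ, 0 ≤ C ∧ ∀ y, a ≤ y → c0 + c1 * y + c2 * y ^ 2 ≤ C * y ^ 2 := by
  refine ⟨c0 / a ^ 2 + c1 / a + c2, by positivity, fun y hy => ?_⟩
  have hy0 : 0 < y := ha.trans_le hy
  have e0 : c0 ≤ c0 / a ^ 2 * y ^ 2 := by
    rw [div_mul_eq_mul_div, le_div_iff₀ (by positivity)]; gcongr
  have e1 : c1 * y ≤ c1 / a * y ^ 2 := by
    rw [div_mul_eq_mul_div, le_div_iff₀ (by positivity), mul_assoc, sq]; gcongr
  linarith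

lemma exists_cubic_bound {a : ℝ} (ha : 0 < a) {c0 c1 c2 c3 : ℝ} (h0 : 0 ≤ c0) (h1 : 0 ≤ c1)
    (h2 : 0 ≤ c2) (h3 : 0 ≤ c3) :
    ∃ C : ℝ, 0 ≤ C ∧ ∀ y, a ≤ y → c0 + c1 * y + c2 * y ^ 2 + c3 * y ^ 3 ≤ C * y ^ 3 := by
  obtain ⟨C, hC, h⟩ := exists_quadratic_bound ha h0 h1 h2
  refine ⟨C / a + c3, by positivity, fun y hy => ?_⟩
  have hy0 : 0 < y := ha.trans_le hy
  have e1 : C * y ^ 2 ≤ C / a * y ^ 3 := by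
    rw [div_mul_eq_mul_div, le_div_iff₀ (by positivity), pow_succ y 2, mul_assoc]; gcongr
  linarith [h y hy]

/-! ### The weak form of the operator -/

/-- Coefficient of `u_x conj(v)` in the weak form; `s` is the sign of `x`. -/
def coefX (ν μ σ r ρ ω s y : ℝ) : ℝ :=
  ν * s * y + ρ * σ * (1 + 2 * μ * y ^ 2) - (ω * ρ * σ * y ^ 2 - 1 / 2 * y + r)

/-- Coefficient of `u_y conj(v)` in the weak form. -/
def coefY (μ σ κ m ω y : ℝ) : ℝ :=
  σ ^ 2 / 2 * (1 + 2 * μ * y ^ 2) - (ω * σ ^ 2 * y ^ 2 + κ * (m - y))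

/-- Coefficient of `u conj(v)` in the weak form. -/
def coef0 (σ κ m r ω y : ℝ) : ℝ :=
  -(1 / 2 * ω * σ ^ 2 * y * (ω * y ^ 2 + 1) + ω * y * κ * (m - y) - r)

/-- The integrand of the weak form, in which only first derivatives of `u` and `v` occur. -/
def weak (ν μ σ κ m r ρ ω : ℝ) (u v : ℝ × ℝ → ℂ) (p : ℝ × ℝ) : ℂ :=
  ((1 / 2 * p.2 : ℝ) * (dX u p * (starRingEnd ℂ) (dX v p))
    + (ρ * σ * p.2 : ℝ) * (dX u p * (starRingEnd ℂ) (dY v p))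
    + (σ ^ 2 / 2 * p.2 : ℝ) * (dY u p * (starRingEnd ℂ) (dY v p))
    + (coefX ν μ σ r ρ ω (sgn p.1) p.2 : ℝ) * (dX u p * (starRingEnd ℂ) (v p))
    + (coefY μ σ κ m ω p.2 : ℝ) * (dY u p * (starRingEnd ℂ) (v p))
    + (coef0 σ κ m r ω p.2 : ℝ) * (u p * (starRingEnd ℂ) (v p))) * (W ν μ p : ℝ)

/-- Integration by parts: in `x` for `½ y u_x conj(v) W`, and in `y` for
`(½ σ² y u_y + ρ σ y u_x) conj(v) W`. -/
lemma formH_eq_weak {a ν μ σ κ m r ρ ω : ℝ} {u v : ℝ × ℝ → ℂ}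
    (hu : IsTest a u) (hv : IsTest a v) :
    formH a ν μ σ κ m r ρ ω u v = ∫ p, weak ν μ σ κ m r ρ ω u v p := by
  have huc := hu.continuous
  have hux := hu.dX.continuous
  have huy := hu.dY.continuous
  have huxx := hu.dX.dX.continuous
  have huxy := hu.dX.dY.continuous
  have huyy := hu.dY.dY.continuous
  have hvc := hv.continuous
  have hvx := hv.dX.continuous
  have hvy := hv.dY.continuous
  have hW := continuous_W ν μ
  have hconj : Continuous (starRingEnd ℂ) := Complex.continuous_conj
  -- the regular and the singular part of `∂/∂x (½ y u_x conj(v) W)`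
  have hx1 : Integrable (fun p : ℝ × ℝ => (1 / 2 * p.2 : ℝ) * (dX (dX u) p * (starRingEnd ℂ) (v p)
      + dX u p * (starRingEnd ℂ) (dX v p)) * (W ν μ p : ℝ) : ℝ × ℝ → ℂ) :=
    hv.integrable_of (by fun_prop) (by intro p h0 h1 h2; simp [h0, h1])
  have hx2 : Integrable (fun p : ℝ × ℝ => (sgn p.1 : ℂ) * ((ν * p.2 : ℝ) *
      (dX u p * (starRingEnd ℂ) (v p)) * (W ν μ p : ℝ)) : ℝ × ℝ → ℂ) := by
    refine Integrable.bdd_mul (c := 1) (hv.integrable_of (by fun_prop)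
      (by intro p h0 h1 h2; simp [h0])) ?_ (.of_forall fun p => ?_)
    · exact (Complex.measurable_ofReal.comp
        (measurable_sgn.comp measurable_fst)).aestronglyMeasurable
    · simp [abs_sgn]
  have hy : Integrable (fun p : ℝ × ℝ =>
      ((σ ^ 2 / 2 : ℝ) * dY u p + (ρ * σ : ℝ) * dX u p) * (starRingEnd ℂ) (v p) * (W ν μ p : ℝ)
      + p.2 * ((σ ^ 2 / 2 : ℝ) * dY (dY u) p + (ρ * σ : ℝ) * dY (dX u) p)
        * (starRingEnd ℂ) (v p) * (W ν μ p : ℝ)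
      + p.2 * ((σ ^ 2 / 2 : ℝ) * dY u p + (ρ * σ : ℝ) * dX u p)
        * (starRingEnd ℂ) (dY v p) * (W ν μ p : ℝ)
      + p.2 * ((σ ^ 2 / 2 : ℝ) * dY u p + (ρ * σ : ℝ) * dX u p)
        * (starRingEnd ℂ) (v p) * (2 * μ * p.2 * W ν μ p : ℝ) : ℝ × ℝ → ℂ) :=
    hv.integrable_of (by fun_prop) (by intro p h0 h1 h2; simp [h0, h2])
  have hL : Integrable (fun p : ℝ × ℝ =>
      LH σ κ m r ρ ω u p * (starRingEnd ℂ) (v p) * ((W ν μ p : ℝ) : ℂ)) :=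
    hv.integrable_of (by unfold LH; fun_prop) (by intro p h0 h1 h2; simp [h0])
  have zx := integral_dx_eq_zero
    (F := fun p : ℝ × ℝ => (1 / 2 * p.2 : ℝ) * (dX u p * (starRingEnd ℂ) (v p)) * (W ν μ p : ℝ))
    (by fun_prop) (hv.hasCompactSupport_of (by intro p h0 h1 h2; simp [h0]))
    (fun x y hx => by
      refine ((((hu.dX.hasDerivAt_x x y).mul (hv.hasDerivAt_x x y).conj').const_mul
        ((1 / 2 * y : ℝ) : ℂ)).mul (hasDerivAt_W_x ν μ y hx).ofReal_comp).congr_deriv ?_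
      simp only [Pi.add_apply, Pi.mul_apply]
      push_cast
      ring) (hx1.add hx2)
  have zy := integral_dy_eq_zero
    (F := fun p : ℝ × ℝ => p.2 * ((σ ^ 2 / 2 : ℝ) * dY u p + (ρ * σ : ℝ) * dX u p)
      * (starRingEnd ℂ) (v p) * (W ν μ p : ℝ))
    (by fun_prop) (hv.hasCompactSupport_of (by intro p h0 h1 h2; simp [h0]))
    (fun x y => by
      refine (((((hasDerivAt_id y).ofReal_comp).mul
        (((hu.dY.hasDerivAt_y x y).const_mul ((σ ^ 2 / 2 : ℝ) : ℂ)).add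
          ((hu.dX.hasDerivAt_y x y).const_mul ((ρ * σ : ℝ) : ℂ)))).mul
        (hv.hasDerivAt_y x y).conj').mul (hasDerivAt_W_y ν μ x y).ofReal_comp).congr_deriv ?_
      simp
      ring) hy
  have hdom : formH a ν μ σ κ m r ρ ω u v =
      ∫ p, LH σ κ m r ρ ω u p * (starRingEnd ℂ) (v p) * ((W ν μ p : ℝ) : ℂ) :=
    setIntegral_eq_integral_of_forall_compl_eq_zero fun p hp => by
      simp [hv.eq_zero (p := p) (not_le.1 hp).le]
  have e := integral_add' (hL.add (hx1.add hx2)) hy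
  rw [integral_add' hL (hx1.add hx2), zx, zy, add_zero, add_zero] at e
  rw [hdom, ← e]
  refine integral_congr_ae (.of_forall fun p => ?_)
  simp only [Pi.add_apply, LH, weak, coefX, coefY, coef0]
  push_cast
  ring

/-- The weak integrand is dominated by the product of the energy densities, because on `[a, ∞)`
the coefficients of its terms with two, one and no derivatives are `O(y)`, `O(y²)` and `O(y³)`. -/
lemma exists_weak_bound {a : ℝ} (ν μ σ κ m r ρ ω : ℝ) (ha : 0 < a) :
    ∃ C : ℝ, 0 ≤ C ∧ ∀ u v : ℝ × ℝ → ℂ, IsTest a v → ∀ p,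
      ‖weak ν μ σ κ m r ρ ω u v p‖ ≤ C * (dens ν μ u p * dens ν μ v p) := by
  obtain ⟨C1, hC1, h1⟩ := exists_quadratic_bound ha (abs_nonneg (ρ * σ - r))
    (add_nonneg (abs_nonneg ν) one_half_pos.le) (abs_nonneg (2 * μ * ρ * σ - ω * ρ * σ))
  obtain ⟨C2, hC2, h2⟩ := exists_quadratic_bound ha (abs_nonneg (σ ^ 2 / 2 - κ * m))
    (abs_nonneg κ) (abs_nonneg (μ * σ ^ 2 - ω * σ ^ 2))
  obtain ⟨C3, hC3, h3⟩ := exists_cubic_bound ha (abs_nonneg r)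
    (abs_nonneg (1 / 2 * ω * σ ^ 2 + ω * κ * m)) (abs_nonneg (ω * κ))
    (abs_nonneg (1 / 2 * ω ^ 2 * σ ^ 2))
  refine ⟨1 / 2 + |ρ * σ| + σ ^ 2 / 2 + C1 + C2 + C3, by positivity, fun u v hv p => ?_⟩
  rcases le_total p.2 a with hp | hp
  · simp [weak, dens, hv.eq_zero hp, hv.dX.eq_zero hp, hv.dY.eq_zero hp]
  have hy : 0 < p.2 := ha.trans_le hp
  have hw := W_pos ν μ p
  have hX : |coefX ν μ σ r ρ ω (sgn p.1) p.2| ≤ C1 * p.2 ^ 2 := by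
    refine le_trans ?_ (h1 p.2 hp)
    have e : coefX ν μ σ r ρ ω (sgn p.1) p.2 = (ρ * σ - r) + (ν * sgn p.1 + 1 / 2) * p.2
        + (2 * μ * ρ * σ - ω * ρ * σ) * p.2 ^ 2 := by unfold coefX; ring
    have e' : |ν * sgn p.1 + 1 / 2| ≤ |ν| + 1 / 2 := by
      refine (abs_add_le _ _).trans ?_
      rw [abs_mul, abs_sgn, mul_one, abs_of_pos (one_half_pos (α := ℝ))]
    rw [e]
    refine (abs_add_three _ _ _).trans ?_
    rw [abs_mul, abs_mul, abs_of_pos hy, abs_of_pos (pow_pos hy 2)]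
    gcongr
  have hY : |coefY μ σ κ m ω p.2| ≤ C2 * p.2 ^ 2 := by
    refine le_trans ?_ (h2 p.2 hp)
    have e : coefY μ σ κ m ω p.2 = (σ ^ 2 / 2 - κ * m) + κ * p.2
        + (μ * σ ^ 2 - ω * σ ^ 2) * p.2 ^ 2 := by unfold coefY; ring
    rw [e]
    refine (abs_add_three _ _ _).trans ?_
    rw [abs_mul, abs_mul, abs_of_pos hy, abs_of_pos (pow_pos hy 2)]
  have h0 : |coef0 σ κ m r ω p.2| ≤ C3 * p.2 ^ 3 := by
    refine le_trans ?_ (h3 p.2 hp)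
    have e : coef0 σ κ m r ω p.2 = (r + -((1 / 2 * ω * σ ^ 2 + ω * κ * m) * p.2)
        + ω * κ * p.2 ^ 2) + -(1 / 2 * ω ^ 2 * σ ^ 2 * p.2 ^ 3) := by unfold coef0; ring
    rw [e]
    refine (abs_add_le _ _).trans ((add_le_add_left (abs_add_three _ _ _) _).trans ?_)
    rw [abs_neg, abs_neg, abs_mul, abs_mul _ (p.2 ^ 2), abs_mul _ (p.2 ^ 3), abs_of_pos hy,
      abs_of_pos (pow_pos hy 2), abs_of_pos (pow_pos hy 3)]
  have hd : dens ν μ u p * dens ν μ v p = p.2 * ((‖dX u p‖ + ‖dY u p‖ + p.2 * ‖u p‖)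
      * (‖dX v p‖ + ‖dY v p‖ + p.2 * ‖v p‖)) * W ν μ p := by
    have s1 := Real.mul_self_sqrt hy.le
    have s2 := Real.mul_self_sqrt hw.le
    unfold dens
    conv_rhs => rw [← s2]
    conv_rhs => lhs; lhs; rw [← s1]
    ring
  have norm_le : ∀ (c B : ℝ) (z w : ℂ), |c| ≤ B →
      ‖(c : ℂ) * (z * (starRingEnd ℂ) w)‖ ≤ B * (‖z‖ * ‖w‖) := fun c B z w h => by
    rw [norm_mul, norm_mul, RCLike.norm_conj, Complex.norm_real, Real.norm_eq_abs]
    gcongr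
  rw [hd, weak, norm_mul, Complex.norm_real, Real.norm_of_nonneg hw.le]
  refine (mul_le_mul_of_nonneg_right ?_ hw.le).trans_eq (mul_assoc _ _ _)
  have t1 := norm_le (1 / 2 * p.2) (1 / 2 * p.2) (dX u p) (dX v p) (abs_of_pos (by positivity)).le
  have t2 := norm_le (ρ * σ * p.2) (|ρ * σ| * p.2) (dX u p) (dY v p)
    (by rw [abs_mul, abs_of_pos hy])
  have t3 := norm_le (σ ^ 2 / 2 * p.2) (σ ^ 2 / 2 * p.2) (dY u p) (dY v p)
    (abs_of_nonneg (by positivity)).le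
  have t4 := norm_le _ _ (dX u p) (v p) hX
  have t5 := norm_le _ _ (dY u p) (v p) hY
  have t6 := norm_le _ _ (u p) (v p) h0
  refine (norm_add_le_of_le (norm_add_le_of_le (norm_add_le_of_le (norm_add_le_of_le
    (norm_add_le_of_le t1 t2) t3) t4) t5) t6).trans ?_
  -- each product is one of the nine terms of `(|u_x| + |u_y| + y |u|) (|v_x| + |v_y| + y |v|)`
  have key : ∀ K A B : ℝ, 0 ≤ K → 0 ≤ B - A → K * p.2 * A ≤ K * p.2 * B :=
    fun K A B hK h => mul_le_mul_of_nonneg_left (sub_nonneg.1 h) (mul_nonneg hK hy.le)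
  have hU1 := norm_nonneg (dX u p)
  have hU2 := norm_nonneg (dY u p)
  have hU0 := mul_nonneg hy.le (norm_nonneg (u p))
  have hV1 := norm_nonneg (dX v p)
  have hV2 := norm_nonneg (dY v p)
  have hV0 := mul_nonneg hy.le (norm_nonneg (v p))
  have m : ∀ {x y : ℝ}, 0 ≤ x → 0 ≤ y → 0 ≤ x * y := mul_nonneg
  have p11 := m hU1 hV1
  have p12 := m hU1 hV2
  have p10 := m hU1 hV0
  have p21 := m hU2 hV1
  have p22 := m hU2 hV2
  have p20 := m hU2 hV0
  have p01 := m hU0 hV1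
  have p02 := m hU0 hV2
  have p00 := m hU0 hV0
  set B := (‖dX u p‖ + ‖dY u p‖ + p.2 * ‖u p‖) * (‖dX v p‖ + ‖dY v p‖ + p.2 * ‖v p‖) with hB
  have k1 := key (1 / 2) (‖dX u p‖ * ‖dX v p‖) B (by positivity) (by rw [hB]; linarith)
  have k2 := key |ρ * σ| (‖dX u p‖ * ‖dY v p‖) B (by positivity) (by rw [hB]; linarith)
  have k3 := key (σ ^ 2 / 2) (‖dY u p‖ * ‖dY v p‖) B (by positivity) (by rw [hB]; linarith)
  have k4 := key C1 (‖dX u p‖ * (p.2 * ‖v p‖)) B hC1 (by rw [hB]; linarith)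
  have k5 := key C2 (‖dY u p‖ * (p.2 * ‖v p‖)) B hC2 (by rw [hB]; linarith)
  have k6 := key C3 (p.2 * ‖u p‖ * (p.2 * ‖v p‖)) B hC3 (by rw [hB]; linarith)
  clear_value B
  linarith

/-- continuity of the Heston sesquilinear form on `V_{φ,ψ}`. -/
theorem stmt_1 (a ν μ σ κ m r ρ ω : ℝ) (ha : 0 < a) (hν : 0 < ν) (hμ : 0 < μ)
    (hσ : 0 < σ) (hκ : 0 < κ) (hm : 0 < m) (hr : 0 ≤ r)
    (hρ : ρ ∈ Set.Icc (-1 : ℝ) 1) (hω : 0 < ω) :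
    ∃ M > (0 : ℝ), ∀ u v : ℝ × ℝ → ℂ, IsTest a u → IsTest a v →
      ‖formH a ν μ σ κ m r ρ ω u v‖ ≤
        M * Real.sqrt (VnormSq a ν μ u) * Real.sqrt (VnormSq a ν μ v) := by
  obtain ⟨C, hC, hb⟩ := exists_weak_bound ν μ σ κ m r ρ ω ha
  refine ⟨(C + 1) * (3 * (1 + (μ ^ 2)⁻¹)), by positivity, fun u v hu hv => ?_⟩
  have hi : Integrable (fun p => dens ν μ u p * dens ν μ v p) :=
    hv.integrable_of (hu.continuous_dens.mul hv.continuous_dens)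
      (by intro p h0 h1 h2; simp [dens, h0, h1, h2])
  rw [formH_eq_weak hu hv]
  calc ‖∫ p, weak ν μ σ κ m r ρ ω u v p‖
      ≤ ∫ p, C * (dens ν μ u p * dens ν μ v p) :=
        norm_integral_le_of_norm_le (hi.const_mul C) (.of_forall (hb u v hv))
    _ = C * ∫ p, dens ν μ u p * dens ν μ v p := integral_const_mul _ _
    _ ≤ C * (3 * (1 + (μ ^ 2)⁻¹) * √(VnormSq a ν μ u) * √(VnormSq a ν μ v)) := by
        gcongr
        exact integral_dens_mul_le ha hμ hu hv
    _ ≤ (C + 1) * (3 * (1 + (μ ^ 2)⁻¹) * √(VnormSq a ν μ u) * √(VnormSq a ν μ v)) := by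
        gcongr
        linarith
    _ = _ := by ring
end
end

section
/- Let a > 0, ν > 0, μ > 0, Ω = ℝ × [a,∞), φ(x) = e^{ν|x|}, ψ(y) = e^{(μ/2)y²}. For every test function v on Ω: (∫_Ω y³ |v|² φ²ψ² dx dy)^{1/2} ≤ (1/μ) (∫_Ω y |∂v/∂y|² φ²ψ² dx dy)^{1/2}, i.e. ‖y^{3/2} v‖_{φ,ψ} ≤ (1/μ) ‖√y ∂v/∂y‖_{φ,ψ}. -/
/-!
The proof is a weighted Hardy inequality obtained from one integration by parts in `y`. Writing
`w = φ² ψ²`, so that `∂w/∂y = 2 μ y w`, the function `y² |v|² w` has `y`-derivative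
`(2 μ y³ |v|² + 2 y |v|² + 2 y² Re (conj v * ∂v/∂y)) w`, whose integral over `ℝ²` vanishes because
`v` has compact support (`integral_fluxDeriv`). For `y ≥ 0`, Young's inequality
`2 y² |v| |∂v/∂y| ≤ μ y³ |v|² + μ⁻¹ y |∂v/∂y|²` bounds that derivative from below by
`(μ y³ |v|² - μ⁻¹ y |∂v/∂y|²) w` (`young_le_fluxDeriv`), and integrating over `Ω` gives the claim.
-/

open MeasureTheory Real

noncomputable section

/-- The `y`-derivative of the flux `y² |v|² φ² ψ²`. -/
def fluxDeriv (ν μ : ℝ) (v : ℝ × ℝ → ℂ) (p : ℝ × ℝ) : ℝ :=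
  (2 * μ * p.2 ^ 3 * ‖v p‖ ^ 2 + 2 * p.2 * ‖v p‖ ^ 2 + 2 * p.2 ^ 2 * inner ℝ (v p) (dY v p))
    * W ν μ p

lemma continuous_dY {v : ℝ × ℝ → ℂ} (hv : ContDiff ℝ (⊤ : ℕ∞) v) : Continuous (dY v) :=
  (hv.continuous_fderiv (by simp)).clm_apply continuous_const

lemma hasCompactSupport_dY {v : ℝ × ℝ → ℂ} (hv : HasCompactSupport v) :
    HasCompactSupport (dY v) := hv.fderiv_apply ℝ _

lemma continuous_fluxDeriv (ν μ : ℝ) {v : ℝ × ℝ → ℂ} (hv : ContDiff ℝ (⊤ : ℕ∞) v) :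
    Continuous (fluxDeriv ν μ v) := by
  have h1 := continuous_W ν μ
  have h2 := continuous_dY hv
  have h3 := hv.continuous
  unfold fluxDeriv
  fun_prop

lemma hasCompactSupport_fluxDeriv (ν μ : ℝ) {v : ℝ × ℝ → ℂ} (hv : HasCompactSupport v) :
    HasCompactSupport (fluxDeriv ν μ v) :=
  hv.mono' ((Function.support_subset_iff'.2 fun p hp => by
    have h0 : v p = 0 := by simpa using hp
    simp [fluxDeriv, h0]).trans (subset_tsupport v))

/-- Since `φ² ψ²` has `y`-derivative `2 μ y φ² ψ²` for every fixed `x`, no differentiability of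
`φ` (which fails at `x = 0`) is needed. -/
lemma hasDerivAt_flux (ν μ x y : ℝ) {v : ℝ × ℝ → ℂ} (hv : ContDiff ℝ (⊤ : ℕ∞) v) :
    HasDerivAt (fun t : ℝ => t ^ 2 * ‖v (x, t)‖ ^ 2 * W ν μ (x, t))
      (fluxDeriv ν μ v (x, y)) y := by
  have hline : HasDerivAt (fun t : ℝ => (x, t)) ((0 : ℝ), (1 : ℝ)) y :=
    (hasDerivAt_const y x).prodMk (hasDerivAt_id y)
  have hvd : HasDerivAt (fun t : ℝ => v (x, t)) (dY v (x, y)) y :=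
    ((hv.differentiable (by simp)) (x, y)).hasFDerivAt.comp_hasDerivAt y hline
  have hw : HasDerivAt (fun t : ℝ => W ν μ (x, t)) (2 * μ * y * W ν μ (x, y)) y := by
    have h := ((((hasDerivAt_pow 2 y).const_mul (μ / 2)).exp).pow 2).const_mul
      (Real.exp (ν * |x|) ^ 2)
    refine h.congr_deriv ?_
    simp only [W]
    push_cast
    ring
  refine (((hasDerivAt_pow 2 y).mul hvd.norm_sq).mul hw).congr_deriv ?_
  simp only [fluxDeriv, Pi.mul_apply]
  push_cast
  ring

lemma integral_fluxDeriv (ν μ : ℝ) {v : ℝ × ℝ → ℂ} (hv : ContDiff ℝ (⊤ : ℕ∞) v)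
    (hc : HasCompactSupport v) : ∫ p, fluxDeriv ν μ v p = 0 := by
  have hcont := continuous_fluxDeriv ν μ hv
  have hint : Integrable (fluxDeriv ν μ v) (volume.prod volume) :=
    hcont.integrable_of_hasCompactSupport (hasCompactSupport_fluxDeriv ν μ hc)
  rw [Measure.volume_eq_prod, integral_prod _ hint]
  refine integral_eq_zero_of_ae (Filter.Eventually.of_forall fun x => ?_)
  have hemb : Topology.IsClosedEmbedding (fun t : ℝ => (x, t)) :=
    (Isometry.of_dist_eq fun s t => by simp [Prod.dist_eq]).isClosedEmbedding
  have hvx : HasCompactSupport (fun t : ℝ => v (x, t)) := hc.comp_isClosedEmbedding hemb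
  have hflux : HasCompactSupport (fun t : ℝ => t ^ 2 * ‖v (x, t)‖ ^ 2 * W ν μ (x, t)) :=
    hvx.mono' ((Function.support_subset_iff'.2 fun t ht => by
      have h0 : v (x, t) = 0 := by simpa using ht
      simp [h0]).trans (subset_tsupport _))
  have hderiv : Integrable (fun t : ℝ => fluxDeriv ν μ v (x, t)) :=
    (hcont.comp hemb.continuous).integrable_of_hasCompactSupport
      ((hasCompactSupport_fluxDeriv ν μ hc).comp_isClosedEmbedding hemb)
  have hcf : Continuous (fun t : ℝ => t ^ 2 * ‖v (x, t)‖ ^ 2 * W ν μ (x, t)) :=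
    continuous_iff_continuousAt.2 fun t => (hasDerivAt_flux ν μ x t hv).continuousAt
  exact integral_eq_zero_of_hasDerivAt_of_integrable (fun t => hasDerivAt_flux ν μ x t hv)
    hderiv (hcf.integrable_of_hasCompactSupport hflux)

/-- Young's inequality absorbs the cross term of the flux derivative. -/
lemma young_le_fluxDeriv (ν : ℝ) {μ : ℝ} (hμ : 0 < μ) (v : ℝ × ℝ → ℂ) {p : ℝ × ℝ}
    (hp : 0 ≤ p.2) :
    μ * (p.2 ^ 3 * ‖v p‖ ^ 2 * W ν μ p) - 1 / μ * (p.2 * ‖dY v p‖ ^ 2 * W ν μ p)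
      ≤ fluxDeriv ν μ v p := by
  have hW : 0 ≤ W ν μ p := by unfold W; positivity
  have hin : -(‖v p‖ * ‖dY v p‖) ≤ inner ℝ (v p) (dY v p) :=
    (abs_le.1 (abs_real_inner_le_norm (v p) (dY v p))).1
  have h1 := mul_le_mul_of_nonneg_left hin (by positivity : 0 ≤ 2 * p.2 ^ 2)
  have h2 : 0 ≤ p.2 / μ * (μ * p.2 * ‖v p‖ - ‖dY v p‖) ^ 2 := by positivity
  have h3 : p.2 / μ * (μ * p.2 * ‖v p‖ - ‖dY v p‖) ^ 2 = μ * (p.2 ^ 3 * ‖v p‖ ^ 2)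
      - 2 * p.2 ^ 2 * (‖v p‖ * ‖dY v p‖) + 1 / μ * (p.2 * ‖dY v p‖ ^ 2) := by
    field_simp
    ring
  have h4 : 0 ≤ 2 * p.2 * ‖v p‖ ^ 2 := by positivity
  calc _ = (μ * (p.2 ^ 3 * ‖v p‖ ^ 2) - 1 / μ * (p.2 * ‖dY v p‖ ^ 2)) * W ν μ p := by ring
    _ ≤ _ := mul_le_mul_of_nonneg_right (by linarith) hW

/-- `‖y^{3/2} v‖_{φ,ψ} ≤ (1/μ) ‖√y ∂v/∂y‖_{φ,ψ}`. -/
theorem stmt_6 (a ν μ : ℝ) (ha : 0 < a) (hν : 0 < ν) (hμ : 0 < μ)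
    (v : ℝ × ℝ → ℂ) (hv : IsTest a v) :
    Real.sqrt (∫ p in dom a, p.2 ^ 3 * ‖v p‖ ^ 2 * W ν μ p) ≤
      (1 / μ) * Real.sqrt (∫ p in dom a, p.2 * ‖dY v p‖ ^ 2 * W ν μ p) := by
  obtain ⟨hs, hc, hsub⟩ := hv
  have hWc := continuous_W ν μ
  have hdc := continuous_dY hs
  have hvc := hs.continuous
  have hA : Integrable (fun p : ℝ × ℝ => p.2 ^ 3 * ‖v p‖ ^ 2 * W ν μ p) :=
    Continuous.integrable_of_hasCompactSupport (by fun_prop)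
      (hc.mono' ((Function.support_subset_iff'.2 fun p hp => by
        have h0 : v p = 0 := by simpa using hp
        simp [h0]).trans (subset_tsupport v)))
  have hB : Integrable (fun p : ℝ × ℝ => p.2 * ‖dY v p‖ ^ 2 * W ν μ p) :=
    Continuous.integrable_of_hasCompactSupport (by fun_prop)
      ((hasCompactSupport_dY hc).mono' ((Function.support_subset_iff'.2 fun p hp => by
        have h0 : dY v p = 0 := by simpa using hp
        simp [h0]).trans (subset_tsupport _)))
  have hG : Integrable (fluxDeriv ν μ v) :=
    (continuous_fluxDeriv ν μ hs).integrable_of_hasCompactSupport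
      (hasCompactSupport_fluxDeriv ν μ hc)
  have hdom : MeasurableSet (dom a) := measurableSet_le measurable_const measurable_snd
  have hG0 : ∫ p in dom a, fluxDeriv ν μ v p = 0 := by
    rw [setIntegral_eq_integral_of_forall_compl_eq_zero, integral_fluxDeriv ν μ hs hc]
    intro p hp
    have h0 : v p = 0 := by
      by_contra h
      have hlt : a < p.2 := hsub (subset_tsupport v h)
      exact hp hlt.le
    simp [fluxDeriv, h0]
  have key := setIntegral_mono_on ((hA.const_mul μ).sub (hB.const_mul (1 / μ))).integrableOn
    hG.integrableOn hdom fun p hp => young_le_fluxDeriv ν hμ v (ha.le.trans hp)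
  rw [hG0] at key
  simp only [Pi.sub_apply] at key
  rw [integral_sub (hA.const_mul μ).integrableOn (hB.const_mul (1 / μ)).integrableOn,
    integral_const_mul, integral_const_mul] at key
  have hle : ∫ p in dom a, p.2 ^ 3 * ‖v p‖ ^ 2 * W ν μ p
      ≤ (1 / μ) ^ 2 * ∫ p in dom a, p.2 * ‖dY v p‖ ^ 2 * W ν μ p := by
    have h := mul_le_mul_of_nonneg_left (sub_nonpos.1 key) (by positivity : 0 ≤ 1 / μ)
    calc _ = 1 / μ * (μ * ∫ p in dom a, p.2 ^ 3 * ‖v p‖ ^ 2 * W ν μ p) := by field_simp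
      _ ≤ _ := h
      _ = _ := by ring
  calc _ ≤ √((1 / μ) ^ 2 * ∫ p in dom a, p.2 * ‖dY v p‖ ^ 2 * W ν μ p) := Real.sqrt_le_sqrt hle
    _ = _ := by rw [Real.sqrt_mul (by positivity), Real.sqrt_sq (by positivity)]
end
end
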